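/- There exists a symmetric $72 \times 72$ integer matrix $Q$ such that: every diagonal entry of $Q$ is $0$; every entry of $Q$ lies in $\{-1, 0, 1\}$; every row of $Q$ contains exactly $25$ zero entries; and $\det Q = 2^{72}$. -/

import Mathlib

/-!
The matrix is assembled from `12 × 12` blocks of size `6`: a symmetric `A` with zero diagonal and
three zeros per row sits in every diagonal block, and a symmetric `B` with two zeros per row sits
in every other block, so that each row has `3 + 11 * 2 = 25` zeros. Writing `J` for the all-ones
matrix, the result is `1 ⊗ (A - B) + J ⊗ B`; as `J` has rank one with eigenvalue `12`, its
determinant is `det (A - B) ^ 11 * det (A + 11 B)` (`det_mul_det_blockMatrix`). The blocks, found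
by a random search, satisfy `det (A - B) = det (A + 11 B) = -64`, which gives `64 ^ 12 = 2 ^ 72`.
-/

open scoped Kronecker

/-- The determinant of `1 ⊗ D + J ⊗ B`, with `J` the all-ones matrix, over a field. Dividing by
`1 ⊗ D` leaves a perturbation of the identity that factors through `m`, to which the
Weinstein–Aronszajn identity applies. -/
lemma det_mul_det_one_kronecker_add {K ι m : Type*} [Field K] [Fintype ι] [DecidableEq ι]
    [Fintype m] [DecidableEq m] (D B : Matrix m m K) (hD : D.det ≠ 0) :
    D.det * ((1 : Matrix ι ι K) ⊗ₖ D + (Matrix.of fun _ _ => 1) ⊗ₖ B).det =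
      D.det ^ Fintype.card ι * (D + (Fintype.card ι : K) • B).det := by
  have hu : IsUnit D.det := isUnit_iff_ne_zero.mpr hD
  let U : Matrix (ι × m) m K := .of fun x b => (D⁻¹ * B) x.2 b
  let V : Matrix m (ι × m) K := .of fun a y => (1 : Matrix m m K) a y.2
  have hfac : (1 : Matrix ι ι K) ⊗ₖ D + (Matrix.of fun _ _ => 1) ⊗ₖ B =
      ((1 : Matrix ι ι K) ⊗ₖ D) * (1 + U * V) := by
    have hUV : U * V = (Matrix.of fun _ _ => 1) ⊗ₖ (D⁻¹ * B) := by
      ext x y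
      simp [U, V, Matrix.mul_apply, Matrix.kroneckerMap_apply, Matrix.one_apply]
    rw [hUV, mul_add, mul_one, ← Matrix.mul_kronecker_mul, one_mul,
      Matrix.mul_nonsing_inv_cancel_left _ _ hu]
  have hVU : V * U = (Fintype.card ι : K) • (D⁻¹ * B) := by
    ext a b
    simp [U, V, Matrix.mul_apply, Fintype.sum_prod_type, Matrix.one_apply]
  have hDB : D + (Fintype.card ι : K) • B = D * (1 + V * U) := by
    rw [hVU, mul_add, mul_one, Matrix.mul_smul, Matrix.mul_nonsing_inv_cancel_left _ _ hu]
  rw [hfac, hDB, Matrix.det_mul, Matrix.det_mul, Matrix.det_kronecker,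
    Matrix.det_one_add_mul_comm U V]
  simp only [Matrix.det_one, one_pow, one_mul]
  ring

/-- The `n × n` block matrix with `A` in the diagonal blocks and `B` in all other blocks. -/
def blockMatrix {m : Type*} (n : ℕ) (A B : Matrix m m ℤ) : Matrix (Fin n × m) (Fin n × m) ℤ :=
  .of fun x y => if x.1 = y.1 then A x.2 y.2 else B x.2 y.2

lemma det_mul_det_blockMatrix {m : Type*} [Fintype m] [DecidableEq m] (n : ℕ)
    (A B : Matrix m m ℤ) (h : (A - B).det ≠ 0) :
    (A - B).det * (blockMatrix n A B).det =
      (A - B).det ^ n * ((A - B) + (n : ℤ) • B).det := by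
  let f := Int.castRingHom ℚ
  have hf : ∀ {k : Type _} [Fintype k] [DecidableEq k] (M : Matrix k k ℤ),
      (M.map f).det = (M.det : ℚ) := fun M => (RingHom.map_det f M).symm
  have hD : ((A - B).map f).det ≠ 0 := by
    rw [hf]
    exact_mod_cast h
  have key := det_mul_det_one_kronecker_add (ι := Fin n) ((A - B).map f) (B.map f) hD
  have hM : (1 : Matrix (Fin n) (Fin n) ℚ) ⊗ₖ ((A - B).map f)
      + (Matrix.of fun _ _ => 1) ⊗ₖ (B.map f) = (blockMatrix n A B).map f := by
    ext x y
    by_cases hxy : x.1 = y.1 <;>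
      simp [blockMatrix, Matrix.kroneckerMap_apply, Matrix.one_apply, hxy, f]
  have hS : (A - B).map f + (Fintype.card (Fin n) : ℚ) • B.map f =
      ((A - B) + (n : ℤ) • B).map f := by
    ext x y
    simp only [Matrix.add_apply, Matrix.map_apply, Matrix.smul_apply]
    simp [f]
  have hM' : ((blockMatrix n A B).map f).det = ((blockMatrix n A B).det : ℚ) :=
    (RingHom.map_det f _).symm
  rw [hM, hS, hf, hM', hf, Fintype.card_fin] at key
  exact_mod_cast key

/-- A determinant read off from a Gaussian elimination `X * D = T`, with `X` lower and `T` upper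
triangular. -/
lemma prod_diag_mul_det_of_elimination {n : ℕ} (X D T : Matrix (Fin n) (Fin n) ℤ)
    (hX : ∀ x : Fin n × Fin n, x.1 < x.2 → X x.1 x.2 = 0)
    (hT : ∀ x : Fin n × Fin n, x.2 < x.1 → T x.1 x.2 = 0) (h : X * D = T) :
    (∏ i, X i i) * D.det = ∏ i, T i i := by
  rw [← Matrix.det_of_isUpperTriangular (M := T) fun i j hij => hT (i, j) hij, ← h, Matrix.det_mul,
    Matrix.det_of_isLowerTriangular X fun i j hij => hX (i, j) hij]

/-- The diagonal block: a signed cubic graph on six vertices. -/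
def diagBlock : Matrix (Fin 6) (Fin 6) ℤ :=
  !![ 0,  0,  1, -1,  1,  0;
      0,  0,  1,  0, -1, -1;
      1,  1,  0, -1,  0,  0;
     -1,  0, -1,  0,  0, -1;
      1, -1,  0,  0,  0, -1;
      0, -1,  0, -1, -1,  0]

/-- The off-diagonal block, with two zeros in each row. -/
def offBlock : Matrix (Fin 6) (Fin 6) ℤ :=
  !![ 1,  1, -1,  1,  0,  0;
      1,  0,  0,  1,  1,  1;
     -1,  0,  0, -1, -1, -1;
      1,  1, -1,  1,  0,  0;
      0,  1, -1,  0,  1,  1;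
      0,  1, -1,  0,  1,  1]

lemma det_diagBlock_sub : (diagBlock - offBlock).det = -64 := by
  have h := prod_diag_mul_det_of_elimination
    !![ 1,  0,  0,  0,  0,  0;
       -1,  1,  0,  0,  0,  0;
        1,  1,  1,  0,  0,  0;
        0,  0,  1,  1,  0,  0;
       -2,  3,  1,  1,  1,  0;
        1, -2, -2, -3, -3,  3]
    (diagBlock - offBlock)
    !![-1, -1,  2, -2,  1,  0;
        0,  1, -1,  1, -3, -2;
        0,  0,  3, -3,  0, -1;
        0,  0,  0, -1,  1,  0;
        0,  0,  0,  0, -8, -8;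
        0,  0,  0,  0,  0,  8]
    (by decide +kernel) (by decide +kernel) (by decide +kernel)
  simp [Fin.prod_univ_succ] at h
  linarith

lemma det_diagBlock_add : ((diagBlock - offBlock) + ((12 : ℕ) : ℤ) • offBlock).det = -64 := by
  have h := prod_diag_mul_det_of_elimination
    !![   1,   0,   0,   0,  0,  0;
         -1,   1,   0,   0,  0,  0;
         -1,  11,  11,   0,  0,  0;
        -12,  12,  11,  11,  0,  0;
       -106, 109,  95,  91,  7,  0;
         52, -53, -47, -45, -9,  6]
    ((diagBlock - offBlock) + ((12 : ℕ) : ℤ) • offBlock)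
    !![11,  11, -10,  10,   1,   0;
        0, -11,  11,   1,   9,  10;
        0,   0,  21, -21, -12, -11;
        0,   0,   0,   1, -13, -12;
        0,   0,   0,   0,  16,  24;
        0,   0,   0,   0,   0,   8]
    (by decide +kernel) (by decide +kernel) (by decide +kernel)
  generalize ((diagBlock - offBlock) + ((12 : ℕ) : ℤ) • offBlock).det = d at h ⊢
  simp [Fin.prod_univ_succ] at h
  linarith

lemma det_blockMatrix_diagBlock : (blockMatrix 12 diagBlock offBlock).det = 2 ^ 72 := by
  have h := det_mul_det_blockMatrix 12 diagBlock offBlock (by rw [det_diagBlock_sub]; norm_num)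
  rw [det_diagBlock_add, det_diagBlock_sub] at h
  norm_num at h ⊢
  linarith

/-- There exists a symmetric `72 × 72` integer matrix with zero diagonal, entries in
`{-1, 0, 1}`, exactly `25` zeroes in every row, and determinant `2^72`. -/
theorem exists_intersection_matrix :
    ∃ Q : Matrix (Fin 72) (Fin 72) ℤ,
      Q.IsSymm ∧ (∀ i, Q i i = 0) ∧ (∀ i j, Q i j ∈ ({-1, 0, 1} : Set ℤ)) ∧
      (∀ i, (Finset.univ.filter (fun j => Q i j = 0)).card = 25) ∧
      Q.det = 2 ^ 72 := by
  let e : Fin 72 ≃ Fin 12 × Fin 6 := (finProdFinEquiv (m := 12) (n := 6)).symm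
  refine ⟨(blockMatrix 12 diagBlock offBlock).submatrix e e, ?_, ?_, ?_, ?_, ?_⟩
  · have hA : ∀ x : Fin 6 × Fin 6, diagBlock x.2 x.1 = diagBlock x.1 x.2 := by decide +kernel
    have hB : ∀ x : Fin 6 × Fin 6, offBlock x.2 x.1 = offBlock x.1 x.2 := by decide +kernel
    refine Matrix.IsSymm.ext fun i j => ?_
    simp only [blockMatrix, Matrix.submatrix_apply, Matrix.of_apply, eq_comm (a := (e j).1),
      hA ((e i).2, (e j).2), hB ((e i).2, (e j).2)]
  · have hA : ∀ a, diagBlock a a = 0 := by decide +kernel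
    intro i
    simpa [blockMatrix] using hA (e i).2
  · have hA : ∀ x : Fin 6 × Fin 6,
        diagBlock x.1 x.2 = -1 ∨ diagBlock x.1 x.2 = 0 ∨ diagBlock x.1 x.2 = 1 := by
      decide +kernel
    have hB : ∀ x : Fin 6 × Fin 6,
        offBlock x.1 x.2 = -1 ∨ offBlock x.1 x.2 = 0 ∨ offBlock x.1 x.2 = 1 := by
      decide +kernel
    intro i j
    simp only [Set.mem_insert_iff, Set.mem_singleton_iff, blockMatrix, Matrix.submatrix_apply,
      Matrix.of_apply]
    split_ifs
    exacts [hA (_, _), hB (_, _)]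
  · have hA : ∀ a, ∑ b, (if diagBlock a b = 0 then 1 else 0) = 3 := by decide +kernel
    have hB : ∀ a, ∑ b, (if offBlock a b = 0 then 1 else 0) = 2 := by decide +kernel
    have hk : ∀ k : Fin 12, ∑ l, (if k = l then 3 else 2) = 25 := by decide +kernel
    intro i
    rw [Finset.card_filter, ← hk (e i).1]
    refine (e.sum_comp fun y =>
      if blockMatrix 12 diagBlock offBlock (e i) y = 0 then 1 else 0).trans ?_
    rw [Fintype.sum_prod_type]
    refine Finset.sum_congr rfl fun l _ => ?_
    by_cases hl : (e i).1 = l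
    · simpa [blockMatrix, hl] using hA (e i).2
    · simpa [blockMatrix, hl] using hB (e i).2
  · rw [Matrix.det_submatrix_equiv_self, det_blockMatrix_diagBlock]
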